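/- arXiv:2210.16806 — 4 statements merged into one kernel-verified Lean document; each statement's English description precedes it below -/
import Mathlib

section
/- Let k ≥ 4 be an even integer and let ℍ = {τ ∈ ℂ : Im τ > 0}. Let w : ℂ → ℂ be holomorphic on ℍ, let w₁, …, w_r be distinct complex numbers and n₁, …, n_r positive integers, and suppose that for every i ∈ {1,…,r} and every point τ₀ ∈ ℍ with w(τ₀) = wᵢ, there exist an open neighborhood U ⊆ ℍ of τ₀ and a holomorphic function g on U with g(τ₀) ≠ 0 such that w(τ) − wᵢ = (τ − τ₀)^{nᵢ} g(τ) for all τ ∈ U (i.e., w − wᵢ has a zero of order exactly nᵢ at every point of ℍ where it vanishes). Set aᵢ = ⌊(k/2)(1 − 1/nᵢ)⌋. Then for every natural number j, there exists a holomorphic function h_j on ℍ such that h_j(τ) = (w′(τ))^{k/2} · (w(τ))^j / ∏_{i=1}^{r} (w(τ) − wᵢ)^{aᵢ} for every τ ∈ ℍ with w(τ) ∉ {w₁, …, w_r}; that is, the function defined by this formula has removable singularities at all points where the denominator vanishes and extends holomorphically to all of ℍ. -/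
open Complex

/-- The upper half-plane as a subset of `ℂ`. -/
def UHP : Set ℂ := {z : ℂ | 0 < z.im}

/-!
Only the points `τ₀` with `w τ₀ = wᵢ` need attention. There `w - wᵢ = (τ - τ₀)^n g` with `n = nᵢ`
and `g τ₀ ≠ 0`, hence `w' = (τ - τ₀)^(n-1) q` with `q` analytic, and the factors `w - w_l`, `l ≠ i`,
are units at `τ₀` because the `w_l` are distinct. So the quotient equals a power of `τ - τ₀` with
exponent `(k/2)(n-1) - n aᵢ` times an analytic function. This exponent is nonnegative
because `aᵢ ≤ (k/2)(1 - 1/n)` (`mul_le_of_eq_floor`). The local extensions are glued by taking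
the punctured limit of the quotient at every point (`exists_differentiableOn_of_local`).
-/

open Filter Topology

/-- Gluing of local holomorphic extensions: if `F` agrees with an analytic germ on a punctured
neighbourhood of each point of `U`, then `z ↦ limUnder (𝓝[≠] z) F` is holomorphic on `U`, and it
has the value `F z` wherever `F` is continuous. -/
lemma exists_differentiableOn_of_local {F : ℂ → ℂ} {U : Set ℂ}
    (hF : ∀ z ∈ U, ∃ G : ℂ → ℂ, AnalyticAt ℂ G z ∧ F =ᶠ[𝓝[≠] z] G) :
    ∃ h : ℂ → ℂ, DifferentiableOn ℂ h U ∧ ∀ z ∈ U, ContinuousAt F z → h z = F z := by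
  refine ⟨fun z => limUnder (𝓝[≠] z) F, fun z hz => ?_, fun z _ hc => ?_⟩
  · obtain ⟨G, hG, hFG⟩ := hF z hz
    have hev : (fun z => limUnder (𝓝[≠] z) F) =ᶠ[𝓝 z] G := by
      have h1 := eventually_eventually_nhds.2 (eventually_nhdsWithin_iff.1 hFG)
      filter_upwards [h1, hG.eventually_analyticAt] with y hy hGy
      have h2 : F =ᶠ[𝓝[≠] y] G := by
        rcases eq_or_ne y z with rfl | hyz
        · exact hFG
        · filter_upwards [hy.filter_mono nhdsWithin_le_nhds,
            mem_nhdsWithin_of_mem_nhds (isOpen_ne.mem_nhds hyz)] with x hx hxz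
          exact hx hxz
      exact ((hGy.continuousAt.tendsto.mono_left nhdsWithin_le_nhds).congr' h2.symm).limUnder_eq
    exact (hG.differentiableAt.congr_of_eventuallyEq hev).differentiableWithinAt
  · exact (hc.tendsto.mono_left nhdsWithin_le_nhds).limUnder_eq

lemma mul_le_of_eq_floor {k n a : ℕ} (hk : Even k) (hn : 1 ≤ n)
    (ha : (a : ℤ) = ⌊(k : ℚ) / 2 * (1 - 1 / (n : ℚ))⌋) : n * a ≤ (n - 1) * (k / 2) := by
  obtain ⟨m, rfl⟩ := hk
  have hn0 : (0 : ℚ) < n := by exact_mod_cast hn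
  have h1 : (a : ℚ) ≤ ((m + m : ℕ) : ℚ) / 2 * (1 - 1 / (n : ℚ)) := by
    have := Int.floor_le (((m + m : ℕ) : ℚ) / 2 * (1 - 1 / (n : ℚ)))
    rw [← ha] at this
    exact_mod_cast this
  have h2 : (n : ℚ) * a ≤ (n - 1) * m := by
    calc (n : ℚ) * a ≤ n * (((m + m : ℕ) : ℚ) / 2 * (1 - 1 / (n : ℚ))) := by gcongr
      _ = (n - 1) * m := by push_cast; field_simp; ring
  have h3 : (m + m) / 2 = m := by omega
  rw [h3]
  have : ((n * a : ℕ) : ℚ) ≤ (((n - 1) * m : ℕ) : ℚ) := by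
    push_cast [Nat.cast_sub hn]; exact h2
  exact_mod_cast this

/-- A zero of order `n ≥ 1` of `w - c` makes `w'` divisible by `(τ - τ₀)^(n-1)`. -/
lemma exists_deriv_eq {w g : ℂ → ℂ} {c z : ℂ} {n : ℕ} (hn : 1 ≤ n) (hg : AnalyticAt ℂ g z)
    (hw : ∀ᶠ τ in 𝓝 z, w τ - c = (τ - z) ^ n * g τ) :
    ∃ q : ℂ → ℂ, AnalyticAt ℂ q z ∧ ∀ᶠ τ in 𝓝 z, deriv w τ = (τ - z) ^ (n - 1) * q τ := by
  refine ⟨fun τ => n * g τ + (τ - z) * deriv g τ, by have := hg.deriv; fun_prop, ?_⟩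
  filter_upwards [eventually_eventually_nhds.2 hw, hg.eventually_analyticAt] with τ hτ hgτ
  have h1 : w =ᶠ[𝓝 τ] fun x => (x - z) ^ n * g x + c := by
    filter_upwards [hτ] with x hx
    rw [← hx]; ring
  rw [h1.deriv_eq]
  have h2 := ((((hasDerivAt_id τ).sub_const z).pow n).mul
    hgτ.differentiableAt.hasDerivAt).add_const c
  refine h2.deriv.trans ?_
  obtain ⟨m, rfl⟩ := Nat.exists_eq_add_of_le' hn
  simp [pow_succ]
  ring

/-- Case (i) of Theorem 2.1: if the Hauptmodul `w` has no pole at any vertex,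
i.e. `w - wᵢ` has a zero of order exactly `nᵢ` at every point of `ℍ` where it
vanishes, then each `h_j` extends holomorphically to all of `ℍ`. -/
theorem holomorphic_hj_no_pole
    (k : ℕ) (hk4 : 4 ≤ k) (hkeven : Even k)
    (r : ℕ) (hr : 1 ≤ r)
    (w : ℂ → ℂ) (hw : DifferentiableOn ℂ w UHP)
    (wv : Fin r → ℂ) (hwv : Function.Injective wv)
    (n : Fin r → ℕ) (hn : ∀ i, 1 ≤ n i)
    (hzero : ∀ (i : Fin r) (τ₀ : ℂ), τ₀ ∈ UHP → w τ₀ = wv i →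
      ∃ U : Set ℂ, IsOpen U ∧ τ₀ ∈ U ∧ U ⊆ UHP ∧
        ∃ g : ℂ → ℂ, DifferentiableOn ℂ g U ∧ g τ₀ ≠ 0 ∧
          ∀ τ ∈ U, w τ - wv i = (τ - τ₀) ^ (n i) * g τ)
    (a : Fin r → ℕ) (ha : ∀ i, (a i : ℤ) = ⌊(k : ℚ) / 2 * (1 - 1 / (n i : ℚ))⌋)
    (j : ℕ) :
    ∃ h : ℂ → ℂ, DifferentiableOn ℂ h UHP ∧
      ∀ τ ∈ UHP, (∀ i : Fin r, w τ ≠ wv i) →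
        h τ = (deriv w τ) ^ (k / 2) * (w τ) ^ j /
          ∏ i : Fin r, (w τ - wv i) ^ (a i) := by
  have hopen : IsOpen UHP := isOpen_lt continuous_const Complex.continuous_im
  have hwan : ∀ z ∈ UHP, AnalyticAt ℂ w z := fun z hz => hw.analyticAt (hopen.mem_nhds hz)
  have hreg : ∀ z ∈ UHP, (∀ i : Fin r, w z ≠ wv i) → AnalyticAt ℂ (fun τ =>
      (deriv w τ) ^ (k / 2) * (w τ) ^ j / ∏ i : Fin r, (w τ - wv i) ^ (a i)) z := by
    intro z hz hne
    have h1 := hwan z hz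
    refine ((h1.deriv.pow _).mul (h1.pow _)).div
      (Finset.analyticAt_fun_prod _ fun i _ => (h1.sub analyticAt_const).pow _) ?_
    exact Finset.prod_ne_zero_iff.2 fun i _ => pow_ne_zero _ (sub_ne_zero.2 (hne i))
  obtain ⟨h, hd, he⟩ := exists_differentiableOn_of_local (U := UHP) (F := fun τ =>
      (deriv w τ) ^ (k / 2) * (w τ) ^ j / ∏ i : Fin r, (w τ - wv i) ^ (a i)) (by
    intro z hz
    by_cases hne : ∀ i : Fin r, w z ≠ wv i
    · exact ⟨_, hreg z hz hne, EventuallyEq.rfl⟩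
    push Not at hne
    obtain ⟨i, hi⟩ := hne
    obtain ⟨V, hVo, hzV, -, g, hg, hg0, hfac⟩ := hzero i z hz hi
    have hga : AnalyticAt ℂ g z := hg.analyticAt (hVo.mem_nhds hzV)
    have hfac' : ∀ᶠ τ in 𝓝 z, w τ - wv i = (τ - z) ^ n i * g τ := by
      filter_upwards [hVo.mem_nhds hzV] with τ hτ using hfac τ hτ
    obtain ⟨q, hq, hqe⟩ := exists_deriv_eq (hn i) hga hfac'
    obtain ⟨e, hexp⟩ := Nat.exists_eq_add_of_le (mul_le_of_eq_floor hkeven (hn i) (ha i))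
    have h1 := hwan z hz
    refine ⟨fun τ => (τ - z) ^ e * q τ ^ (k / 2) * w τ ^ j /
      (g τ ^ a i * ∏ l ∈ Finset.univ.erase i, (w τ - wv l) ^ a l), ?_, ?_⟩
    · refine ((((analyticAt_id.sub analyticAt_const).pow _).mul (hq.pow _)).mul (h1.pow _)).div
        ((hga.pow _).mul
          (Finset.analyticAt_fun_prod _ fun l _ => (h1.sub analyticAt_const).pow _)) ?_
      refine mul_ne_zero (pow_ne_zero _ hg0) (Finset.prod_ne_zero_iff.2 fun l hl => ?_)
      refine pow_ne_zero _ (sub_ne_zero.2 fun hl' => ?_)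
      exact (Finset.mem_erase.1 hl).1 (hwv (hl'.symm.trans hi))
    · filter_upwards [hfac'.filter_mono nhdsWithin_le_nhds, hqe.filter_mono nhdsWithin_le_nhds,
        self_mem_nhdsWithin] with τ hτ hqτ hτz
      have hτ0 : (τ - z) ^ (n i * a i) ≠ 0 := pow_ne_zero _ (sub_ne_zero.2 hτz)
      rw [← Finset.mul_prod_erase _ _ (Finset.mem_univ i), hτ, hqτ, mul_pow, mul_pow, ← pow_mul,
        ← pow_mul, hexp, pow_add, mul_assoc, mul_assoc, mul_assoc, mul_div_mul_left _ _ hτ0,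
        mul_assoc])
  exact ⟨h, hd, fun τ hτ hne => he τ hτ (hreg τ hτ hne).continuousAt⟩
end

section
/- Let k ≥ 4 be an even integer, let τ₀ ∈ ℂ, let n ≥ 1 be an integer, and let w be a holomorphic function on an open neighborhood U of τ₀ such that w − w(τ₀) has a zero of order exactly n at τ₀, i.e., w(τ) − w(τ₀) = (τ − τ₀)^n g(τ) on U for some holomorphic g with g(τ₀) ≠ 0. Set a = ⌊(k/2)(1 − 1/n)⌋. Then the function τ ↦ (w′(τ))^{k/2} / (w(τ) − w(τ₀))^{a}, defined on the set of τ near τ₀ where w(τ) ≠ w(τ₀), has a removable singularity at τ₀: it extends to a function holomorphic in a neighborhood of τ₀, and the extension has a zero of order (k/2)(n − 1) − n·a ≥ 0 at τ₀. -/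
/-! On `U` the product rule gives `w' = (τ - τ₀)^(n-1) * q` with `q = n g + (τ - τ₀) g'`, and
`q τ₀ = n g(τ₀) ≠ 0`. On the open set where `g ≠ 0`, dividing `(w')^(k/2)` by
`(w - w τ₀)^a = (τ - τ₀)^(n a) g^a` leaves `(τ - τ₀)^((k/2)(n-1) - n a) * (q^(k/2) / g^a)`,
whose second factor is holomorphic and nonzero at `τ₀`. The exponent is a natural number because
`a ≤ (k/2)(1 - 1/n)`. -/

open Complex

/-- The local computation underlying Case (i) of Theorem 2.1: if `w - w τ₀` has a
zero of order exactly `n` at `τ₀`, then `(w')^(k/2) / (w - w τ₀)^a`, with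
`a = ⌊(k/2)(1 - 1/n)⌋`, has a removable singularity at `τ₀` and the holomorphic
extension has a zero of order `(k/2)(n-1) - n·a ≥ 0` at `τ₀`. -/
theorem removable_singularity_at_elliptic_point
    (k : ℕ) (hk4 : 4 ≤ k) (hkeven : Even k)
    (n : ℕ) (hn : 1 ≤ n)
    (τ₀ : ℂ) (U : Set ℂ) (hU : IsOpen U) (hτ₀ : τ₀ ∈ U)
    (w : ℂ → ℂ) (hw : DifferentiableOn ℂ w U)
    (g : ℂ → ℂ) (hg : DifferentiableOn ℂ g U) (hg0 : g τ₀ ≠ 0)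
    (hzero : ∀ τ ∈ U, w τ - w τ₀ = (τ - τ₀) ^ n * g τ)
    (a : ℕ) (ha : (a : ℤ) = ⌊(k : ℚ) / 2 * (1 - 1 / (n : ℚ))⌋) :
    n * a ≤ (k / 2) * (n - 1) ∧
    ∃ V : Set ℂ, IsOpen V ∧ τ₀ ∈ V ∧ V ⊆ U ∧
      ∃ h : ℂ → ℂ, DifferentiableOn ℂ h V ∧
        (∀ τ ∈ V, w τ ≠ w τ₀ →
          h τ = (deriv w τ) ^ (k / 2) / (w τ - w τ₀) ^ a) ∧
        ∃ φ : ℂ → ℂ, DifferentiableOn ℂ φ V ∧ φ τ₀ ≠ 0 ∧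
          ∀ τ ∈ V, h τ = (τ - τ₀) ^ ((k / 2) * (n - 1) - n * a) * φ τ := by
  obtain ⟨m, rfl⟩ := hkeven.two_dvd
  obtain ⟨p, rfl⟩ : ∃ p, n = p + 1 := ⟨n - 1, by omega⟩
  have hm : 2 * m / 2 = m := by omega
  rw [hm, Nat.add_sub_cancel]
  have hle : (p + 1) * a ≤ m * p := by
    have h1 : (a : ℚ) ≤ ((2 * m : ℕ) : ℚ) / 2 * (1 - 1 / ((p + 1 : ℕ) : ℚ)) := by
      have := Int.floor_le (((2 * m : ℕ) : ℚ) / 2 * (1 - 1 / ((p + 1 : ℕ) : ℚ)))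
      rw [← ha] at this
      exact_mod_cast this
    have hp : (0 : ℚ) < p + 1 := by positivity
    have h2 : ((2 * m : ℕ) : ℚ) / 2 * (1 - 1 / ((p + 1 : ℕ) : ℚ)) = m * p / (p + 1) := by
      push_cast
      field_simp
      ring
    rw [h2, le_div_iff₀ hp] at h1
    have h3 : ((p : ℚ) + 1) * a ≤ m * p := by linarith
    exact_mod_cast h3
  refine ⟨hle, U ∩ g ⁻¹' {0}ᶜ, hg.continuousOn.isOpen_inter_preimage hU isOpen_compl_singleton,
    ⟨hτ₀, hg0⟩, Set.inter_subset_left, ?_⟩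
  set V := U ∩ g ⁻¹' {0}ᶜ
  set q : ℂ → ℂ := fun τ => (p + 1) * g τ + (τ - τ₀) * deriv g τ with hq
  have hdw : ∀ τ ∈ U, deriv w τ = (τ - τ₀) ^ p * q τ := by
    intro τ hτ
    have hUτ : U ∈ nhds τ := hU.mem_nhds hτ
    have hgd : HasDerivAt g (deriv g τ) τ := (hg.differentiableAt hUτ).hasDerivAt
    have hprod := (((((hasDerivAt_id τ).sub_const τ₀).pow (p + 1)).mul hgd).const_add (w τ₀))
    have hw' : w =ᶠ[nhds τ] fun z => w τ₀ + (z - τ₀) ^ (p + 1) * g z := by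
      filter_upwards [hUτ] with z hz
      rw [← hzero z hz]
      ring
    rw [(hprod.congr_of_eventuallyEq hw').deriv]
    simp [hq]
    ring
  have hqd : DifferentiableOn ℂ q U := by
    have := hg.deriv hU
    fun_prop
  have hφ : DifferentiableOn ℂ (fun τ => q τ ^ m / g τ ^ a) V :=
    ((hqd.mono Set.inter_subset_left).pow m).div ((hg.mono Set.inter_subset_left).pow a)
      fun τ hτ => pow_ne_zero a hτ.2
  refine ⟨fun τ => (τ - τ₀) ^ (m * p - (p + 1) * a) * (q τ ^ m / g τ ^ a), ?_, ?_,
    fun τ => q τ ^ m / g τ ^ a, hφ, ?_, fun τ _ => rfl⟩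
  · exact DifferentiableOn.mul (by fun_prop) hφ
  · intro τ hτ hne
    have hgτ : g τ ≠ 0 := hτ.2
    have hsub : τ - τ₀ ≠ 0 := fun h => hne (by rw [sub_eq_zero.mp h])
    rw [hdw τ hτ.1, hzero τ hτ.1, mul_pow, mul_pow, ← pow_mul, ← pow_mul, mul_comm p m]
    beta_reduce
    rw [pow_sub₀ _ hsub hle, ← div_eq_mul_inv, div_mul_div_comm]
  · have hq0 : q τ₀ ≠ 0 := by
      simpa [hq, hg0] using Nat.cast_add_one_ne_zero (R := ℂ) p
    exact div_ne_zero (pow_ne_zero m hq0) (pow_ne_zero a hg0)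
end

section
/- Let k ≥ 4 be an even integer, let r ≥ 1, let n₁, …, n_r be positive integers, and set aᵢ = ⌊(k/2)(1 − 1/nᵢ)⌋ for i = 1, …, r. Let τ₁ ∈ ℂ and let w be holomorphic on U \ {τ₁} for some open neighborhood U of τ₁, such that w has a pole of order exactly n₁ at τ₁, i.e., (τ − τ₁)^{n₁} w(τ) extends holomorphically to U with nonzero value at τ₁. Let w₂, …, w_r be complex numbers. Then for every natural number j with j ≤ (Σ_{i=1}^{r} aᵢ) − k, the function τ ↦ (w′(τ))^{k/2} · (w(τ))^j / ∏_{i=2}^{r} (w(τ) − wᵢ)^{aᵢ}, defined near τ₁ where w(τ) ∉ {w₂, …, w_r}, has a removable singularity at τ₁ and extends holomorphically across τ₁. -/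
open Complex

/-!
Write `t = τ - τ₁`, `N = n₁`, `m = k / 2` and `A = ∑_{i ≥ 2} aᵢ`. Off `τ₁` one has `w = v / t ^ N`, so
`w' = (v' t - N v) / t ^ (N + 1)` and `w - wᵢ = (v - wᵢ t ^ N) / t ^ N`. Hence the function equals
`t ^ (N A - m (N + 1) - N j) * (v' t - N v) ^ m * v ^ j / ∏ (v - wᵢ t ^ N) ^ aᵢ`.
The denominator is nonzero at `τ₁`, where each factor is `v τ₁`, and the exponent of `t` is nonnegative
because `N a₁ ≤ m (N - 1)` and `j ≤ a₁ + A - 2 m` (`pole_order_bound`).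
-/

/-- The poles of `(w')^m` and `w^j`, of orders `m (N + 1)` and `N j`, are compensated by the
zero of order `N A` contributed by the denominator. -/
lemma pole_order_bound (m N a₁ A j : ℕ) (hN : 1 ≤ N)
    (ha : (a₁ : ℤ) = ⌊((2 * m : ℕ) : ℚ) / 2 * (1 - 1 / (N : ℚ))⌋)
    (hj : (j : ℤ) ≤ a₁ + A - (2 * m : ℕ)) :
    m * (N + 1) + N * j ≤ N * A := by
  have hNpos : (0 : ℚ) < N := by exact_mod_cast hN
  have h1 : ((a₁ : ℤ) : ℚ) ≤ ((2 * m : ℕ) : ℚ) / 2 * (1 - 1 / (N : ℚ)) := by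
    rw [ha]; exact Int.floor_le _
  have h2 : (N : ℚ) * a₁ ≤ m * (N - 1) := by
    calc (N : ℚ) * a₁ ≤ N * (((2 * m : ℕ) : ℚ) / 2 * (1 - 1 / (N : ℚ))) := by
          gcongr; exact_mod_cast h1
      _ = m * (N - 1) := by push_cast; field_simp
  have h3 : (N : ℤ) * a₁ ≤ m * (N - 1) := by exact_mod_cast h2
  have h4 := mul_le_mul_of_nonneg_left hj (Int.natCast_nonneg N)
  push_cast at h4
  zify
  linarith

/-- Derivative of `w = v / (z - τ₁) ^ N` away from `τ₁`, as a quotient by `(z - τ₁) ^ (N + 1)`. -/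
lemma deriv_of_pole {U : Set ℂ} (hU : IsOpen U) {τ₁ τ : ℂ} {v w : ℂ → ℂ} {N : ℕ} (hN : 1 ≤ N)
    (hv : DifferentiableOn ℂ v U)
    (hpole : ∀ z ∈ U, z ≠ τ₁ → v z = (z - τ₁) ^ N * w z) (hτ : τ ∈ U) (hne : τ ≠ τ₁) :
    deriv w τ = (deriv v τ * (τ - τ₁) - N * v τ) / (τ - τ₁) ^ (N + 1) := by
  have ht : τ - τ₁ ≠ 0 := sub_ne_zero.mpr hne
  have hev : w =ᶠ[nhds τ] fun z => v z / (z - τ₁) ^ N := by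
    filter_upwards [hU.mem_nhds hτ, isOpen_ne.mem_nhds hne] with z hz hzne
    rw [hpole z hz hzne]
    have : z - τ₁ ≠ 0 := sub_ne_zero.mpr hzne
    field_simp
  have hd := ((hv.differentiableAt (hU.mem_nhds hτ)).hasDerivAt).div
    (((hasDerivAt_id τ).sub_const τ₁).pow N) (pow_ne_zero N ht)
  rw [hev.deriv_eq]
  refine hd.deriv.trans ?_
  obtain ⟨M, rfl⟩ : ∃ M, N = M + 1 := ⟨N - 1, by omega⟩
  simp only [id, Pi.pow_apply, Nat.add_sub_cancel, mul_one]
  field_simp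
  ring

/-- Case (ii) of Theorem 2.1: if the Hauptmodul `w` has a pole of order exactly
`n₁` at the vertex `τ₁` (so the factor `(w - w₁)^{a₁}` is omitted from the
denominator), then for `j ≤ (Σᵢ aᵢ) - k` the function
`(w')^(k/2) · w^j / ∏_{i≥2} (w - wᵢ)^{aᵢ}` has a removable singularity at `τ₁`. -/
theorem removable_singularity_at_pole_vertex
    (k : ℕ) (hk4 : 4 ≤ k) (hkeven : Even k)
    (r : ℕ) (hr : 1 ≤ r)
    (n : Fin r → ℕ) (hn : ∀ i, 1 ≤ n i)
    (a : Fin r → ℕ) (ha : ∀ i, (a i : ℤ) = ⌊(k : ℚ) / 2 * (1 - 1 / (n i : ℚ))⌋)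
    (τ₁ : ℂ) (U : Set ℂ) (hU : IsOpen U) (hτ₁ : τ₁ ∈ U)
    (w : ℂ → ℂ) (hw : DifferentiableOn ℂ w (U \ {τ₁}))
    (v : ℂ → ℂ) (hv : DifferentiableOn ℂ v U) (hv0 : v τ₁ ≠ 0)
    (hpole : ∀ τ ∈ U, τ ≠ τ₁ → v τ = (τ - τ₁) ^ (n ⟨0, hr⟩) * w τ)
    (wv : Fin r → ℂ)
    (j : ℕ) (hj : (j : ℤ) ≤ (∑ i : Fin r, (a i : ℤ)) - k) :
    ∃ V : Set ℂ, IsOpen V ∧ τ₁ ∈ V ∧ V ⊆ U ∧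
      ∃ h : ℂ → ℂ, DifferentiableOn ℂ h V ∧
        ∀ τ ∈ V, τ ≠ τ₁ → (∀ i : Fin r, i ≠ ⟨0, hr⟩ → w τ ≠ wv i) →
          h τ = (deriv w τ) ^ (k / 2) * (w τ) ^ j /
            ∏ i ∈ Finset.univ.erase (⟨0, hr⟩ : Fin r), (w τ - wv i) ^ (a i) := by
  obtain ⟨m, rfl⟩ : ∃ m, k = 2 * m := hkeven.two_dvd
  set i₀ : Fin r := ⟨0, hr⟩ with hi₀
  set S := Finset.univ.erase i₀ with hS
  have hN : 1 ≤ n i₀ := hn i₀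
  have hsum : (∑ i : Fin r, (a i : ℤ)) = a i₀ + ((∑ i ∈ S, a i : ℕ) : ℤ) := by
    push_cast
    exact (Finset.add_sum_erase _ _ (Finset.mem_univ i₀)).symm
  rw [hsum] at hj
  obtain ⟨e, he⟩ := Nat.exists_eq_add_of_le
    (pole_order_bound m (n i₀) (a i₀) (∑ i ∈ S, a i) j hN (ha i₀) hj)
  set D : ℂ → ℂ := fun τ => ∏ i ∈ S, (v τ - wv i * (τ - τ₁) ^ n i₀) ^ a i with hD
  have hDdiff : DifferentiableOn ℂ D U := by
    refine DifferentiableOn.fun_finsetProd fun i _ => ?_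
    fun_prop
  refine ⟨U ∩ D ⁻¹' {0}ᶜ, hDdiff.continuousOn.isOpen_inter_preimage hU isOpen_compl_singleton,
    ⟨hτ₁, ?_⟩, Set.inter_subset_left,
    fun τ => (τ - τ₁) ^ e * (deriv v τ * (τ - τ₁) - n i₀ * v τ) ^ m * v τ ^ j / D τ, ?_, ?_⟩
  · have hN0 : n i₀ ≠ 0 := by omega
    simp [hD, hN0, Finset.prod_eq_zero_iff, hv0]
  · have hv' : DifferentiableOn ℂ (deriv v) U := hv.deriv hU
    have hnum : DifferentiableOn ℂ
        (fun τ => (τ - τ₁) ^ e * (deriv v τ * (τ - τ₁) - n i₀ * v τ) ^ m * v τ ^ j) U := by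
      fun_prop
    exact (hnum.mono Set.inter_subset_left).div (hDdiff.mono Set.inter_subset_left)
      fun τ hτ => hτ.2
  · rintro τ ⟨hτU, hDτ⟩ hne -
    have ht : τ - τ₁ ≠ 0 := sub_ne_zero.mpr hne
    have hD0 : D τ ≠ 0 := hDτ
    have hDw : D τ = (τ - τ₁) ^ (n i₀ * ∑ i ∈ S, a i) * ∏ i ∈ S, (w τ - wv i) ^ a i := by
      rw [pow_mul, ← Finset.prod_pow_eq_pow_sum, ← Finset.prod_mul_distrib]
      refine Finset.prod_congr rfl fun i _ => ?_
      rw [← mul_pow, hpole τ hτU hne]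
      ring
    have hP0 : ∏ i ∈ S, (w τ - wv i) ^ a i ≠ 0 := right_ne_zero_of_mul (hDw ▸ hD0)
    have hm : 2 * m / 2 = m := by omega
    rw [hm, deriv_of_pole hU hN hv hpole hτU hne]
    beta_reduce
    generalize deriv v τ * (τ - τ₁) - n i₀ * v τ = B
    rw [hDw, he, hpole τ hτU hne, div_pow, ← pow_mul, mul_pow, ← pow_mul, pow_add, pow_add,
      mul_comm (n i₀ + 1) m]
    generalize ∏ i ∈ S, (w τ - wv i) ^ a i = P at hP0
    field_simp
end

section
/- Let k ≥ 4 be an even integer, let r ≥ 1, let n₁, …, n_r be positive integers, and set aᵢ = ⌊(k/2)(1 − 1/nᵢ)⌋ for i = 1, …, r. Let τ₀ ∈ ℂ and let w be holomorphic on U \ {τ₀} for some open neighborhood U of τ₀, such that w has a simple pole at τ₀, i.e., (τ − τ₀)·w(τ) extends holomorphically to U with nonzero value at τ₀. Let w₁, …, w_r be complex numbers. Then for every natural number j with j ≤ (Σ_{i=1}^{r} aᵢ) − k, the function τ ↦ (w′(τ))^{k/2} · (w(τ))^j / ∏_{i=1}^{r} (w(τ) − wᵢ)^{aᵢ}, defined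 near τ₀ where w(τ) ∉ {w₁, …, w_r}, has a removable singularity at τ₀ and extends holomorphically across τ₀. -/
open Complex

/-!
Put `z = τ - τ₀`, `A = ∑ aᵢ` and `k = 2m`. Since `w = v / z`, one has `w' = (v' z - v) / z²` and
`w - wᵢ = (v - wᵢ z) / z`, so the function equals
`z ^ (A - k - j) * (v' z - v) ^ m * v ^ j / ∏ᵢ (v - wᵢ z) ^ aᵢ`.
The exponent of `z` is nonnegative by the bound on `j`, and the denominator does not vanish
near `τ₀` because its value there is `v τ₀ ^ A ≠ 0`; this expression is the holomorphic extension.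
-/

/-- The quotient rule for `w = v / (τ - τ₀)`, which is known only off `τ₀`. -/
lemma deriv_of_simple_pole {τ₀ : ℂ} {U : Set ℂ} (hU : IsOpen U) {w v : ℂ → ℂ}
    (hv : DifferentiableOn ℂ v U)
    (hpole : ∀ τ ∈ U, τ ≠ τ₀ → v τ = (τ - τ₀) * w τ) {τ : ℂ} (hτ : τ ∈ U) (hne : τ ≠ τ₀) :
    deriv w τ = (deriv v τ * (τ - τ₀) - v τ) / (τ - τ₀) ^ 2 := by
  have hz : τ - τ₀ ≠ 0 := sub_ne_zero.mpr hne
  have hloc : w =ᶠ[nhds τ] fun σ => v σ / (σ - τ₀) := by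
    filter_upwards [hU.mem_nhds hτ, isOpen_ne.mem_nhds hne] with σ hσ hσne
    rw [hpole σ hσ hσne, mul_div_cancel_left₀ _ (sub_ne_zero.mpr hσne)]
  rw [hloc.deriv_eq]
  have hvd := (hv.differentiableAt (hU.mem_nhds hτ)).hasDerivAt
  have h := hvd.fun_div ((hasDerivAt_id τ).sub_const τ₀) hz
  simpa using h.deriv

/-- Case (iii) of Theorem 2.1: if the Hauptmodul `w` has a simple pole at a point
`τ₀` distinct from the vertices, then for `j ≤ (Σᵢ aᵢ) - k` the function
`(w')^(k/2) · w^j / ∏ᵢ (w - wᵢ)^{aᵢ}` has a removable singularity at `τ₀`. -/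
theorem removable_singularity_at_simple_pole
    (k : ℕ) (hk4 : 4 ≤ k) (hkeven : Even k)
    (r : ℕ) (hr : 1 ≤ r)
    (n : Fin r → ℕ) (hn : ∀ i, 1 ≤ n i)
    (a : Fin r → ℕ) (ha : ∀ i, (a i : ℤ) = ⌊(k : ℚ) / 2 * (1 - 1 / (n i : ℚ))⌋)
    (τ₀ : ℂ) (U : Set ℂ) (hU : IsOpen U) (hτ₀ : τ₀ ∈ U)
    (w : ℂ → ℂ) (hw : DifferentiableOn ℂ w (U \ {τ₀}))
    (v : ℂ → ℂ) (hv : DifferentiableOn ℂ v U) (hv0 : v τ₀ ≠ 0)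
    (hpole : ∀ τ ∈ U, τ ≠ τ₀ → v τ = (τ - τ₀) * w τ)
    (wv : Fin r → ℂ)
    (j : ℕ) (hj : (j : ℤ) ≤ (∑ i : Fin r, (a i : ℤ)) - k) :
    ∃ V : Set ℂ, IsOpen V ∧ τ₀ ∈ V ∧ V ⊆ U ∧
      ∃ h : ℂ → ℂ, DifferentiableOn ℂ h V ∧
        ∀ τ ∈ V, τ ≠ τ₀ → (∀ i : Fin r, w τ ≠ wv i) →
          h τ = (deriv w τ) ^ (k / 2) * (w τ) ^ j /
            ∏ i : Fin r, (w τ - wv i) ^ (a i) := by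
  obtain ⟨m, rfl⟩ := hkeven
  have hm : (m + m) / 2 = m := by omega
  obtain ⟨e, he⟩ : ∃ e : ℕ, ∑ i, a i = e + 2 * m + j := by
    refine ⟨∑ i, a i - 2 * m - j, ?_⟩
    have : (j : ℤ) ≤ ((∑ i, a i : ℕ) : ℤ) - ((m + m : ℕ) : ℤ) := by simpa using hj
    omega
  have hg : ContinuousOn (fun τ => ∏ i, (v τ - wv i * (τ - τ₀))) U := by
    have := hv.continuousOn
    fun_prop
  refine ⟨U ∩ (fun τ => ∏ i, (v τ - wv i * (τ - τ₀))) ⁻¹' {0}ᶜ,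
    hg.isOpen_inter_preimage hU isOpen_compl_singleton, ⟨hτ₀, ?_⟩, Set.inter_subset_left,
    fun τ => (τ - τ₀) ^ e * (deriv v τ * (τ - τ₀) - v τ) ^ m * v τ ^ j /
      ∏ i, (v τ - wv i * (τ - τ₀)) ^ a i, ?_, ?_⟩
  · simp [hv0]
  · have hv' : DifferentiableOn ℂ v (U ∩ (fun τ => ∏ i, (v τ - wv i * (τ - τ₀))) ⁻¹' {0}ᶜ) :=
      hv.mono Set.inter_subset_left
    have hdv : DifferentiableOn ℂ (deriv v)
        (U ∩ (fun τ => ∏ i, (v τ - wv i * (τ - τ₀))) ⁻¹' {0}ᶜ) :=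
      (hv.deriv hU).mono Set.inter_subset_left
    refine DifferentiableOn.fun_div (by fun_prop) (by fun_prop) ?_
    rintro τ ⟨-, hτ⟩
    have hτ' := Finset.prod_ne_zero_iff.mp hτ
    exact Finset.prod_ne_zero_iff.mpr fun i hi => pow_ne_zero _ (hτ' i hi)
  · rintro τ ⟨hτU, hτ⟩ hne -
    have hz : τ - τ₀ ≠ 0 := sub_ne_zero.mpr hne
    have hτ' := Finset.prod_ne_zero_iff.mp hτ
    have hP : ∏ i, (v τ - wv i * (τ - τ₀)) ^ a i ≠ 0 :=
      Finset.prod_ne_zero_iff.mpr fun i hi => pow_ne_zero _ (hτ' i hi)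
    have hwτ : w τ = v τ / (τ - τ₀) := by
      rw [hpole τ hτU hne, mul_div_cancel_left₀ _ hz]
    have hprod : ∏ i, (w τ - wv i) ^ a i =
        (∏ i, (v τ - wv i * (τ - τ₀)) ^ a i) / (τ - τ₀) ^ (e + 2 * m + j) := by
      rw [← he, ← Finset.prod_pow_eq_pow_sum, ← Finset.prod_div_distrib]
      refine Finset.prod_congr rfl fun i _ => ?_
      rw [← div_pow, sub_div, mul_div_cancel_right₀ _ hz, hwτ]
    rw [hprod, deriv_of_simple_pole hU hv hpole hτU hne, hwτ, hm, div_pow, div_pow, ← pow_mul]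
    beta_reduce
    generalize deriv v τ * (τ - τ₀) - v τ = x
    generalize ∏ i, (v τ - wv i * (τ - τ₀)) ^ a i = P at hP ⊢
    generalize τ - τ₀ = z at hz ⊢
    field_simp
    ring
end
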